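/- Suppose there exists L > 0 such that the map l ↦ A(l) restricted to [0, L] is a continuous, strictly increasing bijection from [0, L] onto [0, 1] with inverse A⁻¹, and suppose moreover there exist γ ∈ [0, 1) and nonnegative reals c_0, c_1, c_2, … such that A⁻¹(w) = Σ_{j=0}^∞ c_j · w^{j+γ} for all w ∈ [0, 1] (the series converging pointwise on [0, 1]). Then E[D_k(N)] = Σ_{j=0}^∞ c_j · (Γ(k + j + γ)/Γ(k)) · (Γ(N + 1)/Γ(N + j + γ + 1)). -/

import Mathlib

open MeasureTheory Metric Filter
open scoped ENNReal Topology

/-- The `k`-th smallest value (1-indexed) among the `N` real numbers `f 0, …, f (N-1)`. -/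
noncomputable def kthVal {N : ℕ} (k : ℕ) (f : Fin N → ℝ) : ℝ :=
  (((Finset.univ : Finset (Fin N)).val.map f).sort (· ≤ ·)).getD (k - 1) 0

lemma sorted_getElem_le (l : List ℝ) (hl : l.Pairwise (· ≤ ·)) (t : ℝ) :
    ∀ n (h : n < l.length), l[n] ≤ t ↔ n < l.countP (fun a => decide (a ≤ t)) := by
  induction l with
  | nil => intro n h; simp at h
  | cons a l ih =>
    rw [List.pairwise_cons] at hl
    intro n h
    by_cases ha : a ≤ t
    · cases n with
      | zero => simp [ha]
      | succ n =>
        have := ih hl.2 n (by simpa using h)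
        simp [ha, this]
    · have h0 : l.countP (fun a => decide (a ≤ t)) = 0 := by
        rw [List.countP_eq_zero]
        intro b hb
        have := hl.1 b hb
        simp; linarith
      have h1 : a ≤ (a :: l)[n] := by
        cases n with
        | zero => simp
        | succ n => exact hl.1 _ (by simp)
      simp only [List.countP_cons, h0, ha]
      simp; simp at ha; linarith

lemma kthVal_le_iff {N : ℕ} (k : ℕ) (hk : 1 ≤ k) (hkN : k ≤ N) (f : Fin N → ℝ) (t : ℝ) :
    kthVal k f ≤ t ↔ k ≤ (Finset.univ.filter (fun i => f i ≤ t)).card := by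
  unfold kthVal
  set l := (((Finset.univ : Finset (Fin N)).val.map f).sort (· ≤ ·)) with hl
  have hlen : l.length = N := by simp [hl]
  have hs : l.Pairwise (· ≤ ·) := Multiset.pairwise_sort _ _
  have hn : k - 1 < l.length := by omega
  have := sorted_getElem_le l hs t (k-1) hn
  rw [List.getD_eq_getElem _ _ hn, this]
  have hc : l.countP (fun a => decide (a ≤ t)) = (Finset.univ.filter (fun i => f i ≤ t)).card := by
    rw [← Multiset.coe_countP, hl, Multiset.sort_eq, Multiset.countP_map]
    rfl
  rw [hc]; omega

lemma kthVal_nonneg {N : ℕ} (k : ℕ) (f : Fin N → ℝ) (hf : ∀ i, 0 ≤ f i) : 0 ≤ kthVal k f := by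
  unfold kthVal
  set l := (((Finset.univ : Finset (Fin N)).val.map f).sort (· ≤ ·)) with hl
  by_cases h : k - 1 < l.length
  · rw [List.getD_eq_getElem _ _ h]
    have := List.getElem_mem h
    have hall : ∀ y ∈ l, 0 ≤ y := by
      intro y hy
      rw [hl, Multiset.mem_sort, Multiset.mem_map] at hy
      obtain ⟨i, _, hi⟩ := hy
      rw [← hi]; exact hf i
    exact hall _ this
  · rw [List.getD_eq_default _ _ (by omega)]

lemma gamma_sum (s : ℝ) (hs : 0 < s) (k : ℕ) :
    ∑ m ∈ Finset.range (k+1), s * Real.Gamma (m + s) / (m.factorial : ℝ)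
      = Real.Gamma (k + 1 + s) / (k.factorial : ℝ) := by
  induction k with
  | zero => simp [Real.Gamma_add_one hs.ne', add_comm 1 s]
  | succ k ih =>
    rw [Finset.sum_range_succ, ih]
    have h := Real.Gamma_add_one (s := (k:ℝ) + 1 + s) (by positivity)
    push_cast [Nat.factorial_succ]
    rw [show (k:ℝ) + 1 + 1 + s = k + 1 + s + 1 by ring, h]
    have : (k.factorial : ℝ) ≠ 0 := by positivity
    field_simp

lemma pi_eq_set_measure {M : Type*} [MeasurableSpace M] (μ : Measure M) [IsProbabilityMeasure μ]
    {N : ℕ} (B : Set M) (hB : MeasurableSet B) [DecidablePred (· ∈ B)] (S : Finset (Fin N)) :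
    MeasurableSet {ω : Fin N → M | Finset.univ.filter (fun i => ω i ∈ B) = S} ∧
    (Measure.pi fun _ : Fin N => μ) {ω | Finset.univ.filter (fun i => ω i ∈ B) = S}
      = ENNReal.ofReal ((μ B).toReal ^ S.card * (1 - (μ B).toReal) ^ (N - S.card)) := by
  have hset : {ω : Fin N → M | Finset.univ.filter (fun i => ω i ∈ B) = S}
      = Set.univ.pi (fun i => if i ∈ S then B else Bᶜ) := by
    ext ω
    simp only [Set.mem_setOf_eq, Set.mem_pi, Set.mem_univ, forall_true_left, Finset.ext_iff,
      Finset.mem_filter, Finset.mem_univ, true_and]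
    refine forall_congr' fun i => ?_
    by_cases hi : i ∈ S <;> simp [hi]
  have hp0 : 0 ≤ (μ B).toReal := ENNReal.toReal_nonneg
  have hp1 : (μ B).toReal ≤ 1 := by
    have := prob_le_one (μ := μ) (s := B)
    exact ENNReal.toReal_le_of_le_ofReal zero_le_one (by simpa using this)
  have h1 : μ B = ENNReal.ofReal (μ B).toReal := by rw [ENNReal.ofReal_toReal (measure_ne_top _ _)]
  have h2 : μ Bᶜ = ENNReal.ofReal (1 - (μ B).toReal) := by
    rw [prob_compl_eq_one_sub hB, ENNReal.ofReal_sub _ hp0, ← h1, ENNReal.ofReal_one]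
  rw [hset]
  constructor
  · refine MeasurableSet.univ_pi fun i => ?_
    split_ifs
    exacts [hB, hB.compl]
  · rw [Measure.pi_pi]
    have : ∀ i, μ (if i ∈ S then B else Bᶜ) = if i ∈ S then μ B else μ Bᶜ := by
      intro i; split_ifs <;> rfl
    simp_rw [this]
    rw [Finset.prod_ite, Finset.prod_const, Finset.prod_const, h2, ENNReal.ofReal_mul (by positivity),
      ENNReal.ofReal_pow hp0, ENNReal.ofReal_pow (by linarith), ← h1]
    congr 2
    · simp
    · rw [Finset.filter_not, Finset.card_sdiff]; simp

/-- binomial tail -/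
noncomputable def btail (N k : ℕ) (p : ℝ) : ℝ :=
  ∑ m ∈ Finset.range k, (N.choose m : ℝ) * (p ^ m * (1 - p) ^ (N - m))

lemma tail_measure {M : Type*} [MeasurableSpace M] (μ : Measure M) [IsProbabilityMeasure μ]
    {N : ℕ} (k : ℕ) (B : Set M) (hB : MeasurableSet B) [DecidablePred (· ∈ B)] :
    MeasurableSet {ω : Fin N → M | (Finset.univ.filter (fun i => ω i ∈ B)).card < k} ∧
    (Measure.pi fun _ : Fin N => μ) {ω | (Finset.univ.filter (fun i => ω i ∈ B)).card < k}
      = ENNReal.ofReal (btail N k (μ B).toReal) := by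
  have hset : {ω : Fin N → M | (Finset.univ.filter (fun i => ω i ∈ B)).card < k}
      = ⋃ S ∈ (Finset.univ : Finset (Finset (Fin N))).filter (fun S => S.card < k),
        {ω : Fin N → M | Finset.univ.filter (fun i => ω i ∈ B) = S} := by
    ext ω; simp
  have hp0 : 0 ≤ (μ B).toReal := ENNReal.toReal_nonneg
  have hp1 : 0 ≤ 1 - (μ B).toReal := by
    have := prob_le_one (μ := μ) (s := B)
    have := ENNReal.toReal_le_of_le_ofReal zero_le_one (by simpa using this)
    linarith
  rw [hset]
  constructor
  · exact Finset.measurableSet_biUnion _ fun S _ => (pi_eq_set_measure μ B hB S).1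
  · rw [measure_biUnion_finset]
    · simp_rw [fun S => (pi_eq_set_measure (N := N) μ B hB S).2]
      rw [← ENNReal.ofReal_sum_of_nonneg (fun S _ => by positivity)]
      congr 1
      unfold btail
      rw [← Finset.sum_fiberwise_of_maps_to (t := Finset.range k) (g := Finset.card)
        (by intro S hS; simpa using hS)]
      refine Finset.sum_congr rfl fun m hm => ?_
      rw [Finset.sum_congr rfl (g := fun _ => (μ B).toReal ^ m * (1 - (μ B).toReal) ^ (N - m))
        (by intro S hS; rw [(Finset.mem_filter.1 hS).2])]
      rw [Finset.sum_const, nsmul_eq_mul]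
      congr 2
      have : ({i ∈ ({S | S.card < k} : Finset (Finset (Fin N))) | i.card = m})
          = Finset.powersetCard m (Finset.univ : Finset (Fin N)) := by
        ext S
        simp only [Finset.mem_range] at hm
        simp only [Finset.mem_filter, Finset.mem_univ, true_and, Finset.mem_powersetCard_univ]
        omega
      rw [this]; simp
    · intro S _ T _ hST
      rw [Function.onFun, Set.disjoint_left]
      intro ω h1 h2
      exact hST (h1.symm.trans h2)
    · exact fun S _ => (pi_eq_set_measure μ B hB S).1

lemma lintegral_beta {a b : ℝ} (ha : 0 < a) (hb : 0 < b) :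
    ∫⁻ u in Set.Ioo (0:ℝ) 1, ENNReal.ofReal (u ^ (a - 1) * (1 - u) ^ (b - 1))
      = ENNReal.ofReal (ProbabilityTheory.beta a b) := by
  have h := ProbabilityTheory.lintegral_betaPDF_eq_one ha hb
  have hp := ProbabilityTheory.beta_pos ha hb
  rw [ProbabilityTheory.lintegral_betaPDF] at h
  simp_rw [mul_assoc, ENNReal.ofReal_mul (one_div_pos.2 hp).le] at h
  rw [lintegral_const_mul _ (by fun_prop)] at h
  calc _ = ENNReal.ofReal (ProbabilityTheory.beta a b) *
        (ENNReal.ofReal (1 / ProbabilityTheory.beta a b) *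
        ∫⁻ u in Set.Ioo (0:ℝ) 1, ENNReal.ofReal (u ^ (a - 1) * (1 - u) ^ (b - 1))) := by
        rw [← mul_assoc, ← ENNReal.ofReal_mul hp.le, mul_one_div_cancel hp.ne', ENNReal.ofReal_one,
          one_mul]
    _ = _ := by rw [h, mul_one]

lemma moment_real (N k : ℕ) (hk : 1 ≤ k) (hkN : k ≤ N) (s : ℝ) (hs : 0 < s) :
    s * ∑ m ∈ Finset.range k, (N.choose m : ℝ) * ProbabilityTheory.beta (m + s) ((N - m : ℕ) + 1)
     = Real.Gamma (k + s) / Real.Gamma k * (Real.Gamma (N + 1) / Real.Gamma (N + s + 1)) := by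
  obtain ⟨k, rfl⟩ : ∃ k', k = k' + 1 := ⟨k - 1, by omega⟩
  have hg := gamma_sum s hs k
  push_cast
  rw [Real.Gamma_nat_eq_factorial, ← hg, Finset.mul_sum, Finset.sum_mul]
  refine Finset.sum_congr rfl fun m hm => ?_
  have hmN : m ≤ N := by simp at hm; omega
  unfold ProbabilityTheory.beta
  rw [Real.Gamma_nat_eq_factorial, Real.Gamma_nat_eq_factorial, Nat.cast_choose ℝ hmN]
  have e : (m:ℝ) + s + ((N - m : ℕ) + 1) = N + s + 1 := by
    rw [Nat.cast_sub hmN]; ring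
  rw [e]
  have : (m.factorial : ℝ) ≠ 0 := by positivity
  have : ((N - m).factorial : ℝ) ≠ 0 := by positivity
  have : Real.Gamma (N + s + 1) ≠ 0 := (Real.Gamma_pos_of_pos (by positivity)).ne'
  field_simp

lemma moment {Ω : Type*} [MeasurableSpace Ω] (P : Measure Ω) [IsProbabilityMeasure P]
    (V : Ω → ℝ) (hV : Measurable V) (hV0 : ∀ ω, 0 ≤ V ω) (hV1 : ∀ ω, V ω ≤ 1)
    (N k : ℕ) (hk : 1 ≤ k) (hkN : k ≤ N)
    (hP : ∀ u ∈ Set.Ioo (0:ℝ) 1, P {ω | u < V ω} = ENNReal.ofReal (btail N k u))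
    (s : ℝ) (hs : 0 ≤ s) :
    ∫⁻ ω, ENNReal.ofReal (V ω ^ s) ∂P = ENNReal.ofReal
      (Real.Gamma (k + s) / Real.Gamma k * (Real.Gamma (N + 1) / Real.Gamma (N + s + 1))) := by
  rcases hs.eq_or_lt with rfl | hs
  · have h1 : Real.Gamma k ≠ 0 := (Real.Gamma_pos_of_pos (by positivity)).ne'
    have h2 : Real.Gamma (N + 1) ≠ 0 := (Real.Gamma_pos_of_pos (by positivity)).ne'
    simp [h1, h2]
  rw [lintegral_rpow_eq_lintegral_meas_lt_mul P (Eventually.of_forall hV0) hV.aemeasurable hs]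
  have hsplit : Set.Ioi (0:ℝ) = Set.Ioo 0 1 ∪ Set.Ici 1 := by
    rw [Set.Ioo_union_Ici_eq_Ioi zero_lt_one]
  rw [hsplit, lintegral_union measurableSet_Ici
    (by rw [Set.disjoint_left]; intro a h1 h2; exact absurd h1.2 (not_lt.2 h2))]
  have hz : ∫⁻ t in Set.Ici (1:ℝ), P {ω | t < V ω} * ENNReal.ofReal (t ^ (s - 1)) = 0 := by
    refine setLIntegral_eq_zero measurableSet_Ici fun t ht => ?_
    have : {ω | t < V ω} = ∅ := by
      ext ω; simp; exact (hV1 ω).trans ht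
    simp [this]
  have hm : ∫⁻ t in Set.Ioo (0:ℝ) 1, P {ω | t < V ω} * ENNReal.ofReal (t ^ (s - 1))
      = ∫⁻ t in Set.Ioo (0:ℝ) 1, ∑ m ∈ Finset.range k, ENNReal.ofReal (N.choose m : ℝ) *
        ENNReal.ofReal (t ^ (((m:ℝ) + s) - 1) * (1 - t) ^ ((((N - m : ℕ) : ℝ) + 1) - 1)) := by
    refine setLIntegral_congr_fun measurableSet_Ioo fun t ht => ?_
    have h0 := ht.1
    have h1 : 0 < 1 - t := by linarith [ht.2]
    rw [hP t ht, ← ENNReal.ofReal_mul' (by positivity)]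
    simp_rw [← ENNReal.ofReal_mul (Nat.cast_nonneg _)]
    rw [← ENNReal.ofReal_sum_of_nonneg (fun m _ => by positivity), btail, Finset.sum_mul]
    congr 1
    refine Finset.sum_congr rfl fun m _ => ?_
    rw [add_sub_cancel_right, Real.rpow_natCast, add_sub_assoc, Real.rpow_add h0, Real.rpow_natCast]
    ring
  rw [hz, add_zero, hm, lintegral_finsetSum _ (by intro m _; fun_prop)]
  have hb : ∀ m ∈ Finset.range k, ∫⁻ t in Set.Ioo (0:ℝ) 1, ENNReal.ofReal (N.choose m : ℝ) *
        ENNReal.ofReal (t ^ (((m:ℝ) + s) - 1) * (1 - t) ^ ((((N - m : ℕ) : ℝ) + 1) - 1))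
      = ENNReal.ofReal ((N.choose m : ℝ) * ProbabilityTheory.beta (m + s) ((N - m : ℕ) + 1)) := by
    intro m _
    rw [lintegral_const_mul _ (by fun_prop), lintegral_beta (by positivity) (by positivity),
      ENNReal.ofReal_mul (by positivity)]
  rw [Finset.sum_congr rfl hb, ← ENNReal.ofReal_sum_of_nonneg, ← ENNReal.ofReal_mul hs.le,
    moment_real N k hk hkN s hs]
  intro m _
  have := ProbabilityTheory.beta_pos (α := m + s) (β := (N - m : ℕ) + 1)
    (by positivity) (by positivity)
  positivity

/-- In the setting of a separable metric space `M` with Borel probability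
measure `μ`, point `x`, `1 ≤ k ≤ N` and i.i.d. sites (product measure on `Fin N → M`):
suppose `A(l) = μ(closedBall x l)` restricted to `[0, L]` is a continuous strictly increasing
bijection onto `[0,1]` with inverse `Ainv`, and that moreover there are `γ ∈ [0,1)` and
nonnegative reals `c_j` with `Ainv w = ∑_j c_j w^(j+γ)` (the series converging pointwise)
for all `w ∈ [0,1]`.  Then
`E[D_k(N)] = ∑_j c_j (Γ(k+j+γ)/Γ(k)) (Γ(N+1)/Γ(N+j+γ+1))`. -/
theorem kth_nearest_distance_series
    {M : Type*} [MetricSpace M] [TopologicalSpace.SeparableSpace M]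
    [MeasurableSpace M] [BorelSpace M]
    (μ : Measure M) [IsProbabilityMeasure μ]
    (x : M) (N k : ℕ) (hN : 1 ≤ N) (hk : 1 ≤ k) (hkN : k ≤ N)
    (L : ℝ) (hL : 0 < L) (Ainv : ℝ → ℝ)
    (hcont : ContinuousOn (fun l => (μ (closedBall x l)).toReal) (Set.Icc 0 L))
    (hmono : StrictMonoOn (fun l => (μ (closedBall x l)).toReal) (Set.Icc 0 L))
    (hbij : Set.BijOn (fun l => (μ (closedBall x l)).toReal) (Set.Icc 0 L) (Set.Icc 0 1))
    (hinv : Set.InvOn Ainv (fun l => (μ (closedBall x l)).toReal) (Set.Icc 0 L) (Set.Icc 0 1))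
    (γ : ℝ) (hγ0 : 0 ≤ γ) (hγ1 : γ < 1) (c : ℕ → ℝ) (hc : ∀ j, 0 ≤ c j)
    (hsum : ∀ w ∈ Set.Icc (0:ℝ) 1, Summable fun j : ℕ => c j * w ^ ((j : ℝ) + γ))
    (hser : ∀ w ∈ Set.Icc (0:ℝ) 1, Ainv w = ∑' j : ℕ, c j * w ^ ((j : ℝ) + γ)) :
    ∫ ω : Fin N → M, kthVal k (fun i => dist x (ω i)) ∂(Measure.pi fun _ : Fin N => μ) =
      ∑' j : ℕ, c j * (Real.Gamma (k + j + γ) / Real.Gamma k) *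
        (Real.Gamma (N + 1) / Real.Gamma (N + j + γ + 1)) := by
  classical
  set A : ℝ → ℝ := fun l => (μ (closedBall x l)).toReal with hA
  set P := Measure.pi fun _ : Fin N => μ with hPdef
  set D : (Fin N → M) → ℝ := fun ω => kthVal k (fun i => dist x (ω i)) with hD
  have hAmono : Monotone A := fun a b hab =>
    ENNReal.toReal_mono (measure_ne_top _ _) (measure_mono (closedBall_subset_closedBall hab))
  have hA0 : ∀ l, 0 ≤ A l := fun l => ENNReal.toReal_nonneg
  have hA1 : ∀ l, A l ≤ 1 := fun l =>
    ENNReal.toReal_le_of_le_ofReal zero_le_one (by simpa using prob_le_one)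
  have hD0 : ∀ ω, 0 ≤ D ω := fun ω => kthVal_nonneg _ _ fun i => dist_nonneg
  have hDset : ∀ t, {ω | t < D ω} =
      {ω : Fin N → M | (Finset.univ.filter (fun i => ω i ∈ closedBall x t)).card < k} := by
    intro t
    ext ω
    have := kthVal_le_iff k hk hkN (fun i => dist x (ω i)) t
    simp only [Set.mem_setOf_eq, mem_closedBall, dist_comm _ x]
    rw [← not_le, this, not_le]
  have hDtail : ∀ t, MeasurableSet {ω | t < D ω} ∧
      P {ω | t < D ω} = ENNReal.ofReal (btail N k (A t)) := by
    intro t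
    rw [hDset]
    exact tail_measure μ k (closedBall x t) measurableSet_closedBall
  have hDm : Measurable D := measurable_of_Ioi fun t => (hDtail t).1
  have hAL : A L = 1 := by
    obtain ⟨l, hl, hl1⟩ := hbij.surjOn (show (1:ℝ) ∈ Set.Icc 0 1 by simp)
    exact le_antisymm (hA1 L) (hl1.symm.le.trans (hAmono hl.2))
  have hDL : ∀ᵐ ω ∂P, D ω ≤ L := by
    rw [ae_iff]
    simp only [not_le]
    rw [(hDtail L).2, hAL, ENNReal.ofReal_eq_zero]
    refine (Finset.sum_eq_zero fun m hm => ?_).le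
    have : N - m ≠ 0 := by simp at hm; omega
    simp [this]
  set V : (Fin N → M) → ℝ := fun ω => A (D ω) with hVdef
  have hVm : Measurable V := hAmono.measurable.comp hDm
  have hVtail : ∀ u ∈ Set.Ioo (0:ℝ) 1, P {ω | u < V ω} = ENNReal.ofReal (btail N k u) := by
    intro u hu
    obtain ⟨l, hl, hlu⟩ := hbij.surjOn (show u ∈ Set.Icc (0:ℝ) 1 from ⟨hu.1.le, hu.2.le⟩)
    have hlu : A l = u := hlu
    have hlL : l < L := by
      by_contra h
      have := hAmono (not_lt.1 h)
      linarith [hu.2]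
    have : {ω | u < V ω} = {ω | l < D ω} := by
      ext ω
      simp only [Set.mem_setOf_eq, hVdef, ← hlu]
      constructor
      · intro h
        by_contra h'
        exact absurd (hAmono (not_lt.1 h')) (not_le.2 h)
      · intro h
        have h2 : l < min (D ω) L := lt_min h hlL
        exact (hmono hl ⟨hl.1.trans h2.le, min_le_right _ _⟩ h2).trans_le
          (hAmono (min_le_left _ _))
    rw [this, (hDtail l).2, hlu]
  have hmom := moment P V hVm (fun ω => hA0 _) (fun ω => hA1 _) N k hk hkN hVtail
  have hDV : ∀ᵐ ω ∂P, ENNReal.ofReal (D ω)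
      = ∑' j : ℕ, ENNReal.ofReal (c j) * ENNReal.ofReal (V ω ^ ((j:ℝ) + γ)) := by
    filter_upwards [hDL] with ω hω
    have h1 : Ainv (V ω) = D ω := hinv.1 ⟨hD0 ω, hω⟩
    have hV : V ω ∈ Set.Icc (0:ℝ) 1 := ⟨hA0 _, hA1 _⟩
    rw [← h1, hser _ hV, ENNReal.ofReal_tsum_of_nonneg
      (fun j => mul_nonneg (hc j) (Real.rpow_nonneg hV.1 _)) (hsum _ hV)]
    simp_rw [ENNReal.ofReal_mul (hc _)]
  rw [integral_eq_lintegral_of_nonneg_ae (Eventually.of_forall hD0) hDm.aestronglyMeasurable,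
    lintegral_congr_ae hDV, lintegral_tsum (fun j => by fun_prop)]
  have hj : ∀ j : ℕ, ∫⁻ ω, ENNReal.ofReal (c j) * ENNReal.ofReal (V ω ^ ((j:ℝ) + γ)) ∂P
      = ENNReal.ofReal (c j * (Real.Gamma (k + j + γ) / Real.Gamma k) *
        (Real.Gamma (N + 1) / Real.Gamma (N + j + γ + 1))) := by
    intro j
    rw [lintegral_const_mul _ (by fun_prop), hmom _ (by positivity), ← ENNReal.ofReal_mul (hc j)]
    simp only [add_assoc, mul_assoc]
  simp_rw [hj]
  rw [ENNReal.tsum_toReal_eq (fun _ => ENNReal.ofReal_ne_top)]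
  refine tsum_congr fun j => ENNReal.toReal_ofReal ?_
  have hkpos : (0:ℝ) < k := by exact_mod_cast hk
  have h1 := Real.Gamma_pos_of_pos (show 0 < (k:ℝ) + j + γ by positivity)
  have h2 := Real.Gamma_pos_of_pos hkpos
  have h3 := Real.Gamma_pos_of_pos (show 0 < (N:ℝ) + 1 by positivity)
  have h4 := Real.Gamma_pos_of_pos (show 0 < (N:ℝ) + j + γ + 1 by positivity)
  have := hc j
  positivity
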